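/- Let n be a natural number with prime factorisation n = p_1^{α_1} ⋯ p_t^{α_t} (the p_i distinct primes). Then every skew brace of order n has finite multipermutation level if and only if α_i ≤ 2 for every i and p_i does not divide p_j^{α_j} − 1 for all i ≠ j. -/

import Mathlib

/-- A skew (left) brace: a set with two group structures `(A,+)` and `(A,∘)`
(the latter written multiplicatively) satisfying
`a ∘ (b + c) = a ∘ b - a + a ∘ c`. -/
class SkewBrace (A : Type*) extends AddGroup A, Group A where
  skew_left_distrib : ∀ a b c : A, a * (b + c) = a * b - a + a * c

/-- The socle series of a skew brace `A`, described internally: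
`Soc_0(A) = {0}` and `Soc_{m+1}(A)` is the preimage in `A` of
`Soc(A/Soc_m(A)) = Z(A/Soc_m(A), +) ∩ Ker(λ̄)`; concretely, `a ∈ Soc_{m+1}(A)`
iff for all `b`, `(a + b) - (b + a) ∈ Soc_m(A)` (centrality in the additive
quotient group) and `(-a + a ∘ b) - b ∈ Soc_m(A)` (i.e. `λ̄_ā = id` on the
quotient). -/
def socSeries (A : Type*) [SkewBrace A] : ℕ → Set A
  | 0 => {0}
  | m + 1 => {a : A | ∀ b : A,
      a + b - (b + a) ∈ socSeries A m ∧ (-a + a * b) - b ∈ socSeries A m}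

/-- A skew brace has finite multipermutation level if `Soc_m(A) = A` for
some `m`. -/
def HasFiniteMultipermutationLevel (A : Type*) [SkewBrace A] : Prop :=
  ∃ m : ℕ, socSeries A m = Set.univ

/-!
Sufficiency. If `n` satisfies the arithmetic condition, every group `G` of order `n` is abelian:
Sylow `p`-subgroups have order at most `p ^ 2`, and no prime `q ≠ p` dividing `n` divides the order
of the automorphism group of one, so Burnside's transfer theorem yields a normal `p`-complement
with abelian quotient. Hence no prime divides the order of a commutator. Thus both groups of a skew
brace of order `n` are abelian, so that `a ⋆ b = -a + a ∘ b - b` makes it a finite commutative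
ring in which every element is quasi-regular. The socle series is its annihilator series, which
exhausts the ring by Nakayama's argument.

Necessity. A nontrivial skew brace with zero socle does not have finite multipermutation level, and
neither does its product with any other skew brace. It remains to exhibit one of order `p ^ 3`
(`HeisenbergBrace`), and one of order `p * q ^ k` when `p ∣ q ^ k - 1`: the trivial skew brace on
`𝔽 ⋊ U`, with `𝔽` the field of `q ^ k` elements and `U ≤ 𝔽ˣ` of order `p`, a group with trivial
center.
-/

/-! ### Groups of a given order are abelian -/

section AbelianGroups

open scoped commutatorElement

/-- The arithmetic condition on `n` under which every group of order `n` is abelian: `n` is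
cube-free, and no prime divisor `p` of `n` divides `q ^ α - 1`, where `q ^ α` is the exact power of
another prime `q` in `n`. -/
def IsAbelianOrder (n : ℕ) : Prop :=
  (∀ p ∈ n.primeFactors, n.factorization p ≤ 2) ∧
    ∀ p ∈ n.primeFactors, ∀ q ∈ n.primeFactors, p ≠ q → ¬ p ∣ q ^ n.factorization q - 1

variable {G : Type*} [Group G]

theorem card_modEq_card_eqLocus_of_pow_eq_one [Finite G] {q : ℕ} [Fact q.Prime] {φ : MulAut G}
    (hφ : φ ^ q = 1) :
    Nat.card G ≡ Nat.card (φ.toMonoidHom.eqLocus (MonoidHom.id G)) [MOD q] := by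
  classical
  have := Fintype.ofFinite G
  have hpow : MulAction.toEndHom φ ^ q ^ 1 = (1 : Function.End G) := by
    rw [pow_one, ← map_pow, hφ, map_one]
  have hmod := Equiv.Perm.card_fixedPoints_modEq hpow
  rwa [← Nat.card_eq_fintype_card, ← Nat.card_eq_fintype_card] at hmod

theorem exists_dvd_pow_sub_one_of_orderOf_mulAut {p q k : ℕ} (hp : p.Prime) (hq : q.Prime)
    (hqp : q ≠ p) (hG : Nat.card G = p ^ k) {φ : MulAut G} (hφ : orderOf φ = q) :
    ∃ i, i ≠ 0 ∧ i ≤ k ∧ q ∣ p ^ i - 1 := by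
  have := Fact.mk hq
  have : Finite G := Nat.finite_of_card_ne_zero (hG ▸ pow_ne_zero k hp.ne_zero)
  set F := φ.toMonoidHom.eqLocus (MonoidHom.id G)
  obtain ⟨j, hjk, hj⟩ := (Nat.dvd_prime_pow hp).1 (hG ▸ F.card_subgroup_dvd_card)
  have hne : j ≠ k := by
    rintro rfl
    have htop : F = ⊤ := Subgroup.eq_top_of_card_eq F (hj.trans hG.symm)
    have hone : φ = 1 := MulEquiv.ext fun x => (htop ▸ Subgroup.mem_top x : x ∈ F)
    exact hq.ne_one (hφ ▸ orderOf_eq_one_iff.2 hone)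
  have hmod : p ^ k ≡ p ^ j [MOD q] := by
    rw [← hG, ← hj]
    exact card_modEq_card_eqLocus_of_pow_eq_one (hφ ▸ pow_orderOf_eq_one φ)
  have hdvd : q ∣ p ^ j * (p ^ (k - j) - 1) := by
    rw [Nat.mul_sub, mul_one, ← pow_add, Nat.add_sub_cancel' hjk]
    exact (Nat.modEq_iff_dvd' (Nat.pow_le_pow_right hp.pos hjk)).1 hmod.symm
  have hcop : q.Coprime (p ^ j) := ((Nat.coprime_primes hq hp).2 hqp).pow_right j
  exact ⟨k - j, by omega, k.sub_le j, hcop.dvd_of_dvd_mul_left hdvd⟩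

theorem dvd_pow_sub_one_of_orderOf_mulAut {p q k : ℕ} (hp : p.Prime) (hq : q.Prime)
    (hqp : q ≠ p) (hk : k ≤ 2) (hG : Nat.card G = p ^ k) {φ : MulAut G} (hφ : orderOf φ = q) :
    q ∣ p ^ k - 1 := by
  obtain ⟨i, hi, hik, hdvd⟩ := exists_dvd_pow_sub_one_of_orderOf_mulAut hp hq hqp hG hφ
  have hi_dvd : i ∣ k := by
    obtain rfl | rfl : i = 1 ∨ i = k := by omega
    · exact one_dvd k
    · exact dvd_rfl
  exact hdvd.trans (Nat.pow_sub_one_dvd_pow_sub_one p hi_dvd)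

theorem isMulCommutative_of_card_eq_prime_pow_le_two {p k : ℕ} [hp : Fact p.Prime] (hk : k ≤ 2)
    (hG : Nat.card G = p ^ k) : IsMulCommutative G := by
  interval_cases k
  · have := (Nat.card_eq_one_iff_unique.1 (hG.trans (pow_zero p))).1
    exact .of_comm fun _ _ => Subsingleton.elim _ _
  · have := isCyclic_of_prime_card (hG.trans (pow_one p))
    exact .of_comm IsCyclic.commGroup.mul_comm
  · exact IsPGroup.isMulCommutative_of_card_eq_prime_sq hG

variable [Finite G] {p : ℕ} [Fact p.Prime] (P : Sylow p G)

open Subgroup in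
theorem sylow_normalizer_le_centralizer_of_orderOf_mulAut_ne [IsMulCommutative P]
    (h : ∀ q : ℕ, q.Prime → q ≠ p → q ∣ Nat.card G → ∀ φ : MulAut P, orderOf φ ≠ q) :
    normalizer (P : Set G) ≤ centralizer (P : Set G) := by
  rw [← relIndex_eq_one]
  by_contra hne
  obtain ⟨q, hq, hdvd⟩ := Nat.exists_prime_and_dvd hne
  have := Fact.mk hq
  have hindex : q ∣ P.index := hdvd.trans <|
    (relIndex_dvd_of_le_left _ (P : Subgroup G).le_centralizer).trans
      (relIndex_dvd_index_of_le le_normalizer)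
  have hqp : q ≠ p := fun heq => P.not_dvd_index (heq ▸ hindex)
  have hrange : q ∣ Nat.card (P : Subgroup G).normalizerMonoidHom.range := by
    rwa [← index_ker, normalizerMonoidHom_ker]
  obtain ⟨φ, hφ⟩ := exists_prime_orderOf_dvd_card' q hrange
  exact h q hq hqp (hindex.trans P.index_dvd_card) φ ((orderOf_coe φ).trans hφ)

theorem not_dvd_orderOf_commutatorElement
    (hP : Subgroup.normalizer (P : Set G) ≤ Subgroup.centralizer (P : Set G)) (a b : G) :
    ¬ p ∣ orderOf ⁅a, b⁆ := by
  have : IsMulCommutative P :=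
    Subgroup.le_centralizer_iff_isMulCommutative.1 (Subgroup.le_normalizer.trans hP)
  have hker : ⁅a, b⁆ ∈ (MonoidHom.transferSylow P hP).ker := by
    rw [MonoidHom.mem_ker, map_commutatorElement, commutatorElement_eq_one_iff_mul_comm]
    exact mul_comm' _ _
  exact fun hdvd => MonoidHom.not_dvd_card_ker_transferSylow P hP
    (hdvd.trans (Subgroup.orderOf_dvd_natCard _ hker))

theorem IsAbelianOrder.isMulCommutative (h : IsAbelianOrder (Nat.card G)) :
    IsMulCommutative G := by
  refine .of_comm fun a b => commutatorElement_eq_one_iff_mul_comm.1 ?_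
  by_contra hne
  obtain ⟨p, hp, hdvd⟩ := Nat.exists_prime_and_dvd (mt orderOf_eq_one_iff.1 hne)
  have := Fact.mk hp
  have mem_primeFactors {q : ℕ} (hq : q.Prime) (hqG : q ∣ Nat.card G) :
      q ∈ (Nat.card G).primeFactors := hq.mem_primeFactors hqG Nat.card_pos.ne'
  have hpG := mem_primeFactors hp (hdvd.trans (orderOf_dvd_natCard _))
  let P : Sylow p G := default
  have hcard : Nat.card P = p ^ (Nat.card G).factorization p := P.card_eq_multiplicity
  have : IsMulCommutative P := isMulCommutative_of_card_eq_prime_pow_le_two (h.1 p hpG) hcard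
  refine not_dvd_orderOf_commutatorElement P
    (sylow_normalizer_le_centralizer_of_orderOf_mulAut_ne P ?_) a b hdvd
  intro q hq hqp hqG φ hφ
  exact h.2 q (mem_primeFactors hq hqG) p hpG hqp
    (dvd_pow_sub_one_of_orderOf_mulAut hp hq hqp (h.1 p hpG) hcard hφ)

end AbelianGroups

/-! ### The annihilator series of a ring -/

section AnnihilatorSeries

variable {R : Type*} [NonUnitalRing R]

/-- The (left) annihilator series of a ring `R`: it starts at `0`, and its next term consists of the
elements `a` such that `a * R` lies in the current one. -/
def annihilatorSeries (R : Type*) [NonUnitalRing R] : ℕ → AddSubgroup R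
  | 0 => ⊥
  | k + 1 => ⨅ b, (annihilatorSeries R k).comap (AddMonoidHom.mulRight b)

theorem mem_annihilatorSeries_succ {k : ℕ} {a : R} :
    a ∈ annihilatorSeries R (k + 1) ↔ ∀ b, a * b ∈ annihilatorSeries R k := by
  simp [annihilatorSeries, AddSubgroup.mem_iInf]

theorem annihilatorSeries_mono : Monotone (annihilatorSeries R) := by
  refine monotone_nat_of_le_succ fun k => ?_
  induction k with
  | zero => exact bot_le
  | succ k ih =>
    exact fun a ha => mem_annihilatorSeries_succ.2 fun b => ih (mem_annihilatorSeries_succ.1 ha b)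

/-- Nakayama's argument: `y = y * c + s` with `s ∈ S` says that `y * (1 - c)` lies in `S`, and
`1 - c` is invertible. -/
theorem mem_of_mem_range_mulLeft_sup {S : AddSubgroup R} (hS : ∀ s ∈ S, ∀ b, s * b ∈ S)
    (hR : ∀ x : R, IsQuasiregular x) {y : R} (hy : y ∈ (AddMonoidHom.mulLeft y).range ⊔ S) :
    y ∈ S := by
  obtain ⟨_, ⟨c, rfl⟩, s, hs, hcs⟩ := AddSubgroup.mem_sup.1 hy
  obtain ⟨d, hd, -⟩ := isQuasiregular_iff.1 (hR (-c))
  have hcd : c * d = d - c := by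
    rw [neg_mul, add_neg_eq_zero] at hd
    rw [← hd, sub_eq_add_neg]
  have hs_eq : s = y - y * c := eq_sub_of_add_eq' hcs
  have hy_eq : y = s * d + s := by
    rw [hs_eq, sub_mul, mul_assoc, hcd, mul_sub]
    abel
  exact hy_eq ▸ add_mem (hS s hs d) hs

theorem eq_top_of_forall_mul_mem [Finite R] {S : AddSubgroup R} (hS : ∀ s ∈ S, ∀ b, s * b ∈ S)
    (hR : ∀ x : R, IsQuasiregular x) (h : ∀ x, (∀ b, x * b ∈ S) → x ∈ S) : S = ⊤ := by
  by_contra hne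
  obtain ⟨x₀, -, hx₀⟩ := SetLike.exists_of_lt (lt_top_iff_ne_top.2 hne)
  obtain ⟨x, hx, hmin⟩ := exists_minimalFor_of_wellFoundedLT (· ∉ S)
    (fun x => (AddMonoidHom.mulLeft x).range ⊔ S) ⟨x₀, hx₀⟩
  obtain ⟨b, hb⟩ := not_forall.1 (mt (h x) hx)
  have hle : (AddMonoidHom.mulLeft (x * b)).range ⊔ S ≤ (AddMonoidHom.mulLeft x).range ⊔ S := by
    refine sup_le_sup_right ?_ S
    rintro _ ⟨c, rfl⟩
    exact ⟨b * c, (mul_assoc x b c).symm⟩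
  exact hb (mem_of_mem_range_mulLeft_sup hS hR
    (hmin hb hle (AddSubgroup.mem_sup_left ⟨b, rfl⟩)))

theorem exists_annihilatorSeries_eq_top [Finite R] (hR : ∀ x : R, IsQuasiregular x) :
    ∃ k, annihilatorSeries R k = ⊤ := by
  obtain ⟨k, hk⟩ := WellFoundedGT.monotone_chain_condition
    (⟨annihilatorSeries R, annihilatorSeries_mono⟩ : ℕ →o AddSubgroup R)
  have hstable : annihilatorSeries R k = annihilatorSeries R (k + 1) := hk (k + 1) k.le_succ
  refine ⟨k, eq_top_of_forall_mul_mem (fun s hs => ?_) hR fun x hx => ?_⟩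
  · exact mem_annihilatorSeries_succ.1 (hstable ▸ hs)
  · exact hstable ▸ mem_annihilatorSeries_succ.2 hx

end AnnihilatorSeries

/-! ### Skew braces with both groups abelian -/

namespace SkewBrace

variable {A : Type*} [SkewBrace A]

theorem mul_zero_eq (a : A) : a * 0 = a := by
  have h := skew_left_distrib a 0 0
  rwa [add_zero, sub_eq_add_neg, add_assoc, left_eq_add, neg_add_eq_zero, eq_comm] at h

theorem zero_eq_one : (0 : A) = 1 :=
  mul_left_cancel (a := (1 : A)) ((mul_zero_eq 1).trans (mul_one 1).symm)

theorem zero_mul_eq (a : A) : 0 * a = a := by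
  rw [zero_eq_one, one_mul]

theorem mem_socSeries_one {a : A} : a ∈ socSeries A 1 ↔ ∀ b, a + b = b + a ∧ a * b = a + b := by
  simp only [socSeries, Set.mem_ofPred_eq, Set.mem_singleton_iff, sub_eq_zero,
    neg_add_eq_iff_eq_add]

/-- The measure `-a + a ∘ b - b` of the failure of `a ∘ b` to be `a + b`, written `a * b` in the
literature on skew braces. -/
def star (a b : A) : A := -a + a * b - b

theorem mul_eq_add_star_add (a b : A) : a * b = a + star a b + b := by
  simp [star, sub_eq_add_neg, add_assoc]

theorem star_zero (a : A) : star a 0 = 0 := by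
  rw [star, mul_zero_eq, neg_add_cancel, sub_zero]

theorem zero_star (a : A) : star 0 a = 0 := by
  rw [star, zero_mul_eq, neg_zero, zero_add, sub_self]

section Commutative

open scoped IsMulCommutative

variable [IsAddCommutative A]

theorem star_add (a b c : A) : star a (b + c) = star a b + star a c := by
  rw [star, skew_left_distrib, star, star]
  abel

variable [IsMulCommutative A]

theorem star_comm (a b : A) : star a b = star b a := by
  rw [star, star, mul_comm']
  abel

theorem add_star (a b c : A) : star (a + b) c = star a c + star b c := by
  rw [star_comm, star_add, star_comm c, star_comm c]

theorem star_assoc (a b c : A) : star (star a b) c = star a (star b c) := by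
  have h := mul_assoc a b c
  simp only [mul_eq_add_star_add, star_add, add_star] at h
  rw [← sub_eq_zero] at h ⊢
  rw [← h]
  abel

end Commutative

end SkewBrace

/-- A skew brace whose two groups are abelian, seen as a ring with multiplication `SkewBrace.star`.
It is a type synonym because `*` already denotes `∘` on the skew brace. -/
def RadicalRing (A : Type*) : Type _ := A

namespace RadicalRing

open SkewBrace
open scoped IsMulCommutative

variable {A : Type*} [SkewBrace A] [IsAddCommutative A] [IsMulCommutative A]

instance : NonUnitalRing (RadicalRing A) where
  __ := (inferInstance : AddCommGroup A)
  mul a b := star (A := A) a b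
  left_distrib := star_add (A := A)
  right_distrib := add_star (A := A)
  zero_mul := zero_star (A := A)
  mul_zero := star_zero (A := A)
  mul_assoc := star_assoc (A := A)

/-- The identity map from a skew brace to its ring. -/
def of : A ≃+ RadicalRing A := AddEquiv.refl A

theorem of_mul_of (a b : A) : of a * of b = of (star a b) := rfl

theorem of_add_of_add_of_mul_of (a b : A) : of a + of b + of a * of b = of (a * b) := by
  rw [of_mul_of, ← map_add, ← map_add, mul_eq_add_star_add]
  congr 1
  abel

theorem isQuasiregular (x : RadicalRing A) : IsQuasiregular x := by
  obtain ⟨a, rfl⟩ := of.surjective x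
  refine isQuasiregular_iff.2 ⟨of a⁻¹, ?_, ?_⟩
  · rw [add_comm (of a⁻¹), of_add_of_add_of_mul_of, mul_inv_cancel, ← zero_eq_one, map_zero]
  · rw [add_comm (of a), of_add_of_add_of_mul_of, inv_mul_cancel, ← zero_eq_one, map_zero]

theorem of_mem_annihilatorSeries {k : ℕ} {a : A} :
    of a ∈ annihilatorSeries (RadicalRing A) k ↔ a ∈ socSeries A k := by
  induction k generalizing a with
  | zero => exact Iff.rfl
  | succ k ih =>
    rw [mem_annihilatorSeries_succ, of.surjective.forall]
    refine forall_congr' fun b => ?_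
    rw [of_mul_of, ih, add_comm' a b, sub_self, ← ih (a := 0), map_zero]
    exact (and_iff_right (zero_mem _)).symm

end RadicalRing

theorem hasFiniteMultipermutationLevel_of_commutative (A : Type*) [Finite A] [SkewBrace A]
    [IsAddCommutative A] [IsMulCommutative A] : HasFiniteMultipermutationLevel A := by
  have : Finite (RadicalRing A) := Finite.of_equiv A RadicalRing.of.toEquiv
  obtain ⟨k, hk⟩ := exists_annihilatorSeries_eq_top (RadicalRing.isQuasiregular (A := A))
  exact ⟨k, Set.eq_univ_of_forall fun a =>
    RadicalRing.of_mem_annihilatorSeries.1 (hk ▸ AddSubgroup.mem_top _)⟩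

theorem IsAbelianOrder.hasFiniteMultipermutationLevel {A : Type*} [Finite A] [SkewBrace A]
    (h : IsAbelianOrder (Nat.card A)) : HasFiniteMultipermutationLevel A := by
  have : IsMulCommutative A := h.isMulCommutative
  have hcomm : IsMulCommutative (Multiplicative A) := IsAbelianOrder.isMulCommutative h
  have : IsAddCommutative A := .of_comm fun a b =>
    mul_comm' (Multiplicative.ofAdd a) (Multiplicative.ofAdd b)
  exact hasFiniteMultipermutationLevel_of_commutative A

/-! ### Skew braces with zero socle and products -/

section Obstruction

theorem not_hasFiniteMultipermutationLevel_of_socSeries_one_eq {A : Type*} [SkewBrace A]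
    [Nontrivial A] (h : socSeries A 1 = {0}) : ¬ HasFiniteMultipermutationLevel A := by
  have hzero (m : ℕ) : socSeries A m = {0} := by
    induction m with
    | zero => rfl
    | succ m ih => rw [socSeries, ih]; exact h
  rintro ⟨m, hm⟩
  exact Set.singleton_ne_univ (0 : A) ((hzero m).symm.trans hm)

variable {A B : Type*} [SkewBrace A] [SkewBrace B]

instance SkewBrace.instProd : SkewBrace (A × B) where
  skew_left_distrib a b c :=
    Prod.ext (skew_left_distrib a.1 b.1 c.1) (skew_left_distrib a.2 b.2 c.2)

theorem fst_mem_socSeries {m : ℕ} {x : A × B} (hx : x ∈ socSeries (A × B) m) :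
    x.1 ∈ socSeries A m := by
  induction m generalizing x with
  | zero => exact congrArg Prod.fst hx
  | succ m ih => exact fun b => ⟨ih (hx (b, 0)).1, ih (hx (b, 0)).2⟩

theorem HasFiniteMultipermutationLevel.of_prod (h : HasFiniteMultipermutationLevel (A × B)) :
    HasFiniteMultipermutationLevel A := by
  obtain ⟨m, hm⟩ := h
  exact ⟨m, Set.eq_univ_of_forall fun a => fst_mem_socSeries (x := (a, (0 : B))) (hm ▸ trivial)⟩

end Obstruction

/-- The trivial skew brace on a group `G`: both `+` and `∘` are the multiplication of `G`. -/
def TrivialBrace (G : Type*) : Type _ := G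

namespace TrivialBrace

variable {G : Type*} [Group G]

instance : AddGroup (TrivialBrace G) := inferInstanceAs (AddGroup (Additive G))

instance : Group (TrivialBrace G) := inferInstanceAs (Group G)

theorem mul_eq_add (a b : TrivialBrace G) : a * b = a + b := rfl

instance : SkewBrace (TrivialBrace G) where
  skew_left_distrib a b c := by simp [mul_eq_add, sub_eq_add_neg, add_assoc]

/-- The identity map from a group to its trivial skew brace. -/
def of : G ≃* TrivialBrace G := MulEquiv.refl G

theorem of_mem_socSeries_one {g : G} :
    of g ∈ socSeries (TrivialBrace G) 1 ↔ g ∈ Subgroup.center G := by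
  simp only [SkewBrace.mem_socSeries_one, Subgroup.mem_center_iff, of.surjective.forall,
    ← mul_eq_add, ← map_mul, of.injective.eq_iff, and_true, eq_comm]

theorem not_hasFiniteMultipermutationLevel [Nontrivial G] (h : Subgroup.center G = ⊥) :
    ¬ HasFiniteMultipermutationLevel (TrivialBrace G) := by
  have : Nontrivial (TrivialBrace G) := (of (G := G)).injective.nontrivial
  refine not_hasFiniteMultipermutationLevel_of_socSeries_one_eq (Set.ext fun a => ?_)
  obtain ⟨g, rfl⟩ := of.surjective a
  rw [of_mem_socSeries_one, h, Subgroup.mem_bot, Set.mem_singleton_iff, SkewBrace.zero_eq_one,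
    map_eq_one_iff of of.injective]

end TrivialBrace

theorem hasFiniteMultipermutationLevel_of_card_dvd.{u} {n : ℕ} (hn : n ≠ 0)
    (h : ∀ (B : Type u) [Fintype B] [SkewBrace B], Fintype.card B = n →
      HasFiniteMultipermutationLevel B)
    (A : Type u) [SkewBrace A] (hA : Nat.card A ∣ n) : HasFiniteMultipermutationLevel A := by
  obtain ⟨k, rfl⟩ := hA
  have : Finite A := Nat.finite_of_card_ne_zero (left_ne_zero_of_mul hn)
  have : NeZero k := ⟨right_ne_zero_of_mul hn⟩
  let C := TrivialBrace (Multiplicative (ZMod k))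
  have : Finite C := inferInstanceAs (Finite (ZMod k))
  have := Fintype.ofFinite (A × C)
  refine (h (A × C) ?_).of_prod
  rw [← Nat.card_eq_fintype_card, Nat.card_prod]
  exact congrArg (Nat.card A * ·) (Nat.card_zmod k)

/-! ### A skew brace of order `p ^ 3` with zero socle -/

/-- For a commutative ring `R`, the skew brace on `R × R × R` with `∘` the Heisenberg group law
(`(x, y, z)` being the upper unitriangular matrix with entries `z`, `y` next to the diagonal and `x`
in the corner), and `+` the addition twisted in the coordinate `z` by the determinant of the
coordinates `x`, `y`. -/
@[ext]
structure HeisenbergBrace (R : Type*) where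
  x : R
  y : R
  z : R

namespace HeisenbergBrace

/-- The coordinates of an element. -/
def equivProd (R : Type*) : HeisenbergBrace R ≃ R × R × R where
  toFun a := (a.x, a.y, a.z)
  invFun a := ⟨a.1, a.2.1, a.2.2⟩

theorem card_eq (R : Type*) : Nat.card (HeisenbergBrace R) = Nat.card R ^ 3 := by
  rw [Nat.card_congr (equivProd R), Nat.card_prod, Nat.card_prod]
  ring

variable {R : Type*} [CommRing R]

@[simps]
instance : Add (HeisenbergBrace R) where
  add a b := ⟨a.x + b.x, a.y + b.y, a.z + b.z + (a.x * b.y - a.y * b.x)⟩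

@[simps]
instance : Zero (HeisenbergBrace R) where
  zero := ⟨0, 0, 0⟩

@[simps]
instance : Neg (HeisenbergBrace R) where
  neg a := ⟨-a.x, -a.y, -a.z⟩

instance : AddGroup (HeisenbergBrace R) :=
  AddGroup.ofLeftAxioms (fun a b c => by ext <;> simp <;> ring) (fun a => by ext <;> simp)
    (fun a => by ext <;> simp; ring)

@[simps]
instance : Mul (HeisenbergBrace R) where
  mul a b := ⟨a.x + b.x + a.z * b.y, a.y + b.y, a.z + b.z⟩

@[simps]
instance : One (HeisenbergBrace R) where
  one := ⟨0, 0, 0⟩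

@[simps]
instance : Inv (HeisenbergBrace R) where
  inv a := ⟨-a.x + a.z * a.y, -a.y, -a.z⟩

instance : Group (HeisenbergBrace R) :=
  Group.ofLeftAxioms (fun a b c => by ext <;> simp <;> ring) (fun a => by ext <;> simp)
    (fun a => by ext <;> simp)

instance : SkewBrace (HeisenbergBrace R) where
  skew_left_distrib a b c := by ext <;> simp [sub_eq_add_neg] <;> ring

theorem socSeries_one : socSeries (HeisenbergBrace R) 1 = {0} := by
  refine Set.eq_singleton_iff_unique_mem.2 ⟨?_, fun a ha => ?_⟩
  · exact SkewBrace.mem_socSeries_one.2 fun b => by simp [SkewBrace.zero_mul_eq]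
  have hmul (b : HeisenbergBrace R) : a * b = a + b := (SkewBrace.mem_socSeries_one.1 ha b).2
  have hy : a.y = 0 := by simpa using congrArg z (hmul ⟨1, 0, 0⟩)
  have hx : a.x = 0 := by simpa using congrArg z (hmul ⟨0, 1, 0⟩)
  have hz : a.z = 0 := by simpa using congrArg x (hmul ⟨0, 1, 0⟩)
  exact HeisenbergBrace.ext hx hy hz

theorem not_hasFiniteMultipermutationLevel [Nontrivial R] :
    ¬ HasFiniteMultipermutationLevel (HeisenbergBrace R) := by
  have : Nontrivial (HeisenbergBrace R) := (equivProd R).nontrivial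
  exact not_hasFiniteMultipermutationLevel_of_socSeries_one_eq socSeries_one

end HeisenbergBrace

theorem exists_skewBrace_card_eq_pow_three {m : ℕ} (hm : m ≠ 1) :
    ∃ (A : Type) (_ : SkewBrace A), Nat.card A = m ^ 3 ∧ ¬ HasFiniteMultipermutationLevel A := by
  have : Nontrivial (ZMod m) := ZMod.nontrivial_iff.2 hm
  refine ⟨HeisenbergBrace (ZMod m), inferInstance, ?_,
    HeisenbergBrace.not_hasFiniteMultipermutationLevel⟩
  rw [HeisenbergBrace.card_eq, Nat.card_zmod]

/-! ### Semidirect products with trivial center -/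

section TrivialCenter

theorem center_semidirectProduct_eq_bot {N G : Type*} [CommGroup N] [Group G] {φ : G →* MulAut N}
    (hφ : Function.Injective φ) (hfix : ∀ x, (∀ g, φ g x = x) → x = 1) :
    Subgroup.center (N ⋊[φ] G) = ⊥ := by
  refine (Subgroup.eq_bot_iff_forall _).2 fun a ha => ?_
  rw [Subgroup.mem_center_iff] at ha
  have hright : a.right = 1 := by
    refine (map_eq_one_iff φ hφ).1 (MulEquiv.ext fun x => ?_)
    simpa [mul_comm x] using (congrArg SemidirectProduct.left (ha (.inl x))).symm
  have hleft : a.left = 1 := by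
    refine hfix _ fun g => ?_
    simpa using congrArg SemidirectProduct.left (ha (.inr g))
  exact SemidirectProduct.ext hleft hright

variable {R : Type*} [Ring R] (U : Subgroup Rˣ)

/-- The action of a group `U` of units of a ring on the additive group of the ring, so that
`Multiplicative R ⋊[unitsMulAut U] U` is the group of affine maps `x ↦ u * x + b` with `u ∈ U`. -/
def unitsMulAut : U →* MulAut (Multiplicative R) :=
  (MulAutMultiplicative R).symm.toMonoidHom.comp (DistribMulAction.toAddAut U R)

variable {U}

theorem unitsMulAut_apply (u : U) (x : R) :
    unitsMulAut U u (.ofAdd x) = .ofAdd ((u : Rˣ) * x) := rfl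

theorem unitsMulAut_injective : Function.Injective (unitsMulAut U) := by
  refine (injective_iff_map_eq_one _).2 fun u hu => Subtype.ext (Units.ext ?_)
  simpa [unitsMulAut_apply] using DFunLike.congr_fun hu (.ofAdd (1 : R))

theorem center_affineGroup_eq_bot [NoZeroDivisors R] (hU : U ≠ ⊥) :
    Subgroup.center (Multiplicative R ⋊[unitsMulAut U] U) = ⊥ := by
  refine center_semidirectProduct_eq_bot unitsMulAut_injective fun x hx => ?_
  obtain ⟨u, hu⟩ := U.ne_bot_iff_exists_ne_one.1 hU
  have hmul : ((u : Rˣ) - 1 : R) * x.toAdd = 0 := by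
    rw [sub_mul, one_mul, sub_eq_zero]
    exact congrArg Multiplicative.toAdd (hx u)
  have hu_ne : ((u : Rˣ) - 1 : R) ≠ 0 := by
    simpa [sub_eq_zero] using hu
  exact (mul_eq_zero.1 hmul).resolve_left hu_ne

end TrivialCenter

theorem exists_skewBrace_card_eq_mul_prime_pow {p q k : ℕ} (hp : p.Prime) (hq : q.Prime)
    (hk : k ≠ 0) (hdvd : p ∣ q ^ k - 1) :
    ∃ (A : Type) (_ : SkewBrace A), Nat.card A = p * q ^ k ∧
      ¬ HasFiniteMultipermutationLevel A := by
  have := Fact.mk hp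
  have := Fact.mk hq
  let F := GaloisField q k
  have : Finite F := inferInstanceAs (Finite (GaloisField q k))
  have hF : Nat.card F = q ^ k := GaloisField.card q k hk
  obtain ⟨u, hu⟩ := exists_prime_orderOf_dvd_card' (G := Fˣ) p
    (by rwa [Nat.card_units, hF])
  let U := Subgroup.zpowers u
  have hU : Nat.card U = p := (Nat.card_zpowers u).trans hu
  have hU_ne : U ≠ ⊥ := fun h => hp.ne_one (hU.symm.trans (Subgroup.card_eq_one.2 h))
  let G := Multiplicative F ⋊[unitsMulAut U] U
  have : Nontrivial G := SemidirectProduct.inl_injective.nontrivial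
  refine ⟨TrivialBrace G, inferInstance, ?_,
    TrivialBrace.not_hasFiniteMultipermutationLevel (center_affineGroup_eq_bot hU_ne)⟩
  calc Nat.card G = Nat.card F * Nat.card U := SemidirectProduct.card
    _ = p * q ^ k := by rw [hF, hU, mul_comm]

theorem isAbelianOrder_of_forall_hasFiniteMultipermutationLevel {n : ℕ} (hn : n ≠ 0)
    (h : ∀ (A : Type) [Fintype A] [SkewBrace A], Fintype.card A = n →
      HasFiniteMultipermutationLevel A) : IsAbelianOrder n := by
  refine ⟨fun p hp => ?_, fun p hp q hq hpq hdvd => ?_⟩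
  · by_contra! hcube
    obtain ⟨A, _, hA, hnot⟩ :=
      exists_skewBrace_card_eq_pow_three (Nat.prime_of_mem_primeFactors hp).ne_one
    exact hnot (hasFiniteMultipermutationLevel_of_card_dvd hn h A
      (hA ▸ (pow_dvd_pow p hcube).trans (Nat.ordProj_dvd n p)))
  · have hp' := Nat.prime_of_mem_primeFactors hp
    have hq' := Nat.prime_of_mem_primeFactors hq
    have hqn := Nat.dvd_of_mem_primeFactors hq
    obtain ⟨A, _, hA, hnot⟩ := exists_skewBrace_card_eq_mul_prime_pow hp' hq'
      (hq'.factorization_pos_of_dvd hn hqn).ne' hdvd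
    have hcop : p.Coprime (q ^ n.factorization q) :=
      ((Nat.coprime_primes hp' hq').2 hpq).pow_right _
    exact hnot (hasFiniteMultipermutationLevel_of_card_dvd hn h A
      (hA ▸ hcop.mul_dvd_of_dvd_of_dvd (Nat.dvd_of_mem_primeFactors hp) (Nat.ordProj_dvd n q)))

/-- Every skew brace of order `n` has finite multipermutation level iff the
prime factorisation of `n` is cube-free and `p ∤ q^{α_q} - 1` for distinct
primes `p, q` dividing `n`. -/
theorem every_skewBrace_has_fml_iff (n : ℕ) (hn : 0 < n) :
    (∀ (A : Type) [Fintype A] [SkewBrace A], Fintype.card A = n →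
      HasFiniteMultipermutationLevel A) ↔
    ((∀ p ∈ n.primeFactors, n.factorization p ≤ 2) ∧
      (∀ p ∈ n.primeFactors, ∀ q ∈ n.primeFactors, p ≠ q →
        ¬ p ∣ q ^ n.factorization q - 1)) := by
  refine ⟨isAbelianOrder_of_forall_hasFiniteMultipermutationLevel hn.ne', ?_⟩
  rintro (h : IsAbelianOrder n) A _ _ rfl
  rw [← Nat.card_eq_fintype_card] at h
  exact h.hasFiniteMultipermutationLevel
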